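/- Let F be a C² strict MTP₂ cdf on (0,∞)ⁿ with everywhere positive density f, split as above with marginals F₁, F₂ and r(x) = F(x)/(F₁(x₁)F₂(x₂)). Then for every integer m ≥ 2 and all x ∈ (0,∞)ⁿ, F^{m*}(x) > (r(x))^m F₁^{m*}(x₁) F₂^{m*}(x₂). -/

import Mathlib

open MeasureTheory Filter Set

/-- Update one coordinate of a point of `(0,∞)^k × (0,∞)^l`, coordinates
indexed by `Fin k ⊕ Fin l`. -/
def updCoord {k l : ℕ} (x : (Fin k → ℝ) × (Fin l → ℝ)) :
    Fin k ⊕ Fin l → ℝ → (Fin k → ℝ) × (Fin l → ℝ)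
  | Sum.inl i, t => (Function.update x.1 i t, x.2)
  | Sum.inr j, t => (x.1, Function.update x.2 j t)

/-- The value of one coordinate. -/
def coordVal {k l : ℕ} (x : (Fin k → ℝ) × (Fin l → ℝ)) : Fin k ⊕ Fin l → ℝ
  | Sum.inl i => x.1 i
  | Sum.inr j => x.2 j

set_option linter.unusedSectionVars false

section Abstract

variable {E : Type*} [AddCommGroup E] [PartialOrder E] [IsOrderedAddMonoid E]
  [MeasurableSpace E] [MeasurableAdd₂ E]

/-- convolution powers, shifted by one -/
noncomputable def cpow (μ : Measure E) : ℕ → Measure E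
  | 0 => μ
  | m + 1 => (cpow μ m).conv μ

instance cpow_finite (μ : Measure E) [IsFiniteMeasure μ] (m : ℕ) :
    IsFiniteMeasure (cpow μ m) := by
  induction m with
  | zero => simpa [cpow]
  | succ m ih => simp only [cpow]; infer_instance

theorem measAdd : Measurable (fun p : E × E => p.1 + p.2) := by fun_prop

theorem conv_Iic (hI : ∀ x : E, MeasurableSet (Iic x)) (ν μ : Measure E)
    [IsFiniteMeasure ν] [IsFiniteMeasure μ] (x : E) :
    Measurable (fun y => ν.real (Iic (x - y))) ∧
    (ν.conv μ).real (Iic x) = ∫ y, ν.real (Iic (x - y)) ∂μ := by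
  have hs : MeasurableSet {p : E × E | p.1 + p.2 ≤ x} :=
    (measAdd (E := E)) (hI x)
  have hpre : ∀ y, (fun z => (z, y)) ⁻¹' {p : E × E | p.1 + p.2 ≤ x} = Iic (x - y) := by
    intro y; ext z; simp [le_sub_iff_add_le]
  have hm : Measurable (fun y => ν (Iic (x - y))) := by
    have := measurable_measure_prodMk_right (μ := ν) hs
    simpa only [hpre] using this
  refine ⟨hm.ennreal_toReal, ?_⟩
  have h1 : (ν.conv μ) (Iic x) = ∫⁻ y, ν (Iic (x - y)) ∂μ := by
    rw [Measure.conv, Measure.map_apply (measAdd (E := E)) (hI x)]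
    have := Measure.prod_apply_symm (μ := ν) (ν := μ) hs
    simp only [hpre] at this
    exact this
  rw [Measure.real, h1]
  symm
  exact integral_toReal hm.aemeasurable (Eventually.of_forall fun y => measure_lt_top _ _)

theorem conv_integrable (hI : ∀ x : E, MeasurableSet (Iic x)) (ν μ : Measure E)
    [IsFiniteMeasure ν] [IsFiniteMeasure μ] (x : E) :
    Integrable (fun y => ν.real (Iic (x - y))) μ := by
  refine Integrable.of_bound (conv_Iic hI ν μ x).1.aestronglyMeasurable (ν.real univ)
    (Eventually.of_forall fun y => ?_)
  rw [Real.norm_of_nonneg measureReal_nonneg]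
  exact measureReal_mono (subset_univ _)

theorem cpow_supp {P : Set E} (hP : MeasurableSet P) (hadd : ∀ a ∈ P, ∀ b ∈ P, a + b ∈ P)
    (μ : Measure E) [IsFiniteMeasure μ] (hμ : ∀ᵐ y ∂μ, y ∈ P) (m : ℕ) :
    ∀ᵐ y ∂(cpow μ m), y ∈ P := by
  induction m with
  | zero => simpa [cpow]
  | succ m ih =>
    simp only [cpow, Measure.conv]
    refine (ae_map_iff (measAdd (E := E)).aemeasurable hP).2 ?_
    have h1 : ∀ᵐ p ∂((cpow μ m).prod μ), p.1 ∈ P :=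
      Measure.quasiMeasurePreserving_fst.ae ih
    have h2 : ∀ᵐ p ∂((cpow μ m).prod μ), p.2 ∈ P :=
      Measure.quasiMeasurePreserving_snd.ae hμ
    filter_upwards [h1, h2] with p a b using hadd _ a _ b

theorem cpow_zero_of_not {P : Set E} (hP : MeasurableSet P)
    (hadd : ∀ a ∈ P, ∀ b ∈ P, a + b ∈ P) (hup : ∀ a ∈ P, ∀ b, a ≤ b → b ∈ P)
    (μ : Measure E) [IsFiniteMeasure μ] (hμ : ∀ᵐ y ∂μ, y ∈ P) (m : ℕ) (w : E) (hw : w ∉ P) :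
    (cpow μ m).real (Iic w) = 0 := by
  rw [Measure.real, measure_mono_null (t := Pᶜ) ?_ (cpow_supp hP hadd μ hμ m)]
  · simp
  · intro a ha haP
    exact hw (hup a haP w ha)

theorem cpow_pos (hI : ∀ x : E, MeasurableSet (Iic x)) {P : Set E}
    (hhalf : ∀ a ∈ P, ∃ b ∈ P, b + b = a)
    (μ : Measure E) [IsFiniteMeasure μ] (hμ : ∀ w ∈ P, 0 < μ (Iic w)) (m : ℕ) (w : E) (hw : w ∈ P) :
    0 < (cpow μ m).real (Iic w) := by
  refine ENNReal.toReal_pos (ne_of_gt ?_) (measure_ne_top _ _)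
  induction m generalizing w with
  | zero => simpa [cpow] using hμ w hw
  | succ m ih =>
    obtain ⟨b, hb, rfl⟩ := hhalf w hw
    simp only [cpow, Measure.conv]
    rw [Measure.map_apply (measAdd (E := E)) (hI _)]
    refine lt_of_lt_of_le (b := ((cpow μ m).prod μ) (Iic b ×ˢ Iic b)) ?_ (measure_mono ?_)
    · rw [Measure.prod_prod]
      exact ENNReal.mul_pos (ih b hb).ne' (hμ b hb).ne'
    · rintro ⟨p, q⟩ ⟨h1, h2⟩
      exact add_le_add h1 h2

/-- the measure with density `g` -/
noncomputable def dm (vol : Measure E) (g : E → ℝ) : Measure E :=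
  vol.withDensity (fun y => ENNReal.ofReal (g y))

theorem dm_integral (vol : Measure E) (g : E → ℝ) (hg : Integrable g vol) (h0 : ∀ y, 0 ≤ g y)
    (φ : E → ℝ) : ∫ y, φ y ∂(dm vol g) = ∫ y, φ y * g y ∂vol := by
  rw [dm, integral_withDensity_eq_integral_toReal_smul₀ hg.aemeasurable.ennreal_ofReal
    (Eventually.of_forall fun y => ENNReal.ofReal_lt_top)]
  refine integral_congr_ae (Eventually.of_forall fun y => ?_)
  simp [ENNReal.toReal_ofReal (h0 y), mul_comm]

theorem dm_finite (vol : Measure E) (g : E → ℝ) (hg : Integrable g vol) :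
    IsFiniteMeasure (dm vol g) :=
  isFiniteMeasure_withDensity_ofReal hg.2

theorem dm_supp (vol : Measure E) (g : E → ℝ) (hg : Integrable g vol) {P : Set E}
    (hs : ∀ y, y ∉ P → g y = 0) : ∀ᵐ y ∂(dm vol g), y ∈ P := by
  rw [dm, ae_withDensity_iff' hg.aemeasurable.ennreal_ofReal]
  refine Eventually.of_forall fun y hy => ?_
  by_contra h
  simp [hs y h] at hy

theorem cdf_eq (hI : ∀ x : E, MeasurableSet (Iic x)) {P : Set E} (hP : MeasurableSet P)
    (hadd : ∀ a ∈ P, ∀ b ∈ P, a + b ∈ P) (hP0 : ∀ a ∈ P, 0 ≤ a)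
    (hup : ∀ a ∈ P, ∀ b, a ≤ b → b ∈ P)
    (vol : Measure E) (g : E → ℝ) (hg : Integrable g vol) (h0 : ∀ y, 0 ≤ g y)
    (hs : ∀ y, y ∉ P → g y = 0) (H : ℕ → E → ℝ) (B : E → Set E)
    (hB : ∀ x, B x = P ∩ Iic x)
    (h1 : ∀ x, H 1 x = ∫ y in B x, g y ∂vol)
    (hrec : ∀ m : ℕ, 1 ≤ m → ∀ x, H (m + 1) x = ∫ y in B x, H m (x - y) * g y ∂vol) (m : ℕ) :
    ∀ x, H (m + 1) x = (cpow (dm vol g) m).real (Iic x) := by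
  have hfin := dm_finite vol g hg
  induction m with
  | zero =>
    intro x
    rw [h1, hB, cpow, ← integral_indicator (hP.inter (hI x)), ← integral_indicator_one (hI x),
      dm_integral vol g hg h0]
    refine integral_congr_ae (Eventually.of_forall fun y => ?_)
    by_cases hyP : y ∈ P <;> by_cases hyx : y ∈ Iic x <;> simp_all [indicator]
  | succ m ih =>
    intro x
    rw [hrec (m + 1) (by omega) x, hB, cpow, (conv_Iic hI _ _ x).2, dm_integral vol g hg h0,
      ← integral_indicator (hP.inter (hI x))]
    refine integral_congr_ae (Eventually.of_forall fun y => ?_)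
    by_cases hyP : y ∈ P
    · by_cases hyx : y ∈ Iic x
      · simp [indicator, hyP, mem_Iic.1 hyx, ih]
      · have : (cpow (dm vol g) m).real (Iic (x - y)) = 0 := by
          refine cpow_zero_of_not hP hadd hup _ (dm_supp vol g hg hs) m _ fun h => ?_
          exact hyx (sub_nonneg.1 (hP0 _ h))
        simp [this, indicator, show ¬ y ≤ x from hyx]
    · simp [indicator, hyP, hs y hyP]

end Abstract

section Step

variable {E₁ E₂ : Type*} [AddCommGroup E₁] [PartialOrder E₁] [IsOrderedAddMonoid E₁]
  [MeasurableSpace E₁] [MeasurableAdd₂ E₁] [AddCommGroup E₂] [PartialOrder E₂]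
  [IsOrderedAddMonoid E₂] [MeasurableSpace E₂] [MeasurableAdd₂ E₂]
  [MeasurableAdd₂ (E₁ × E₂)]

theorem prod_Iic (α : Measure E₁) (β : Measure E₂) [IsFiniteMeasure α] [IsFiniteMeasure β]
    (x : E₁ × E₂) : (α.prod β).real (Iic x) = α.real (Iic x.1) * β.real (Iic x.2) := by
  rw [show Iic x = Iic x.1 ×ˢ Iic x.2 from rfl, measureReal_prod_prod]

theorem step_ineq (hI₁ : ∀ x : E₁, MeasurableSet (Iic x)) (hI₂ : ∀ x : E₂, MeasurableSet (Iic x))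
    (hI : ∀ x : E₁ × E₂, MeasurableSet (Iic x))
    (P₁ : Set E₁) (P₂ : Set E₂) (hP₁ : ∀ a ∈ P₁, 0 ≤ a) (hP₂ : ∀ a ∈ P₂, 0 ≤ a)
    (μ ν : Measure (E₁ × E₂)) (α μ₁ : Measure E₁) (β μ₂ : Measure E₂)
    [IsFiniteMeasure μ] [IsFiniteMeasure ν] [IsFiniteMeasure α] [IsFiniteMeasure μ₁]
    [IsFiniteMeasure β] [IsFiniteMeasure μ₂]
    (hα : ∀ w, w ∉ P₁ → α.real (Iic w) = 0) (hβ : ∀ w, w ∉ P₂ → β.real (Iic w) = 0)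
    (hμ₁ : ∀ w, w ∉ P₁ → μ₁.real (Iic w) = 0) (hμ₂ : ∀ w, w ∉ P₂ → μ₂.real (Iic w) = 0)
    (hα' : ∀ w ∈ P₁, 0 < α.real (Iic w)) (hβ' : ∀ w ∈ P₂, 0 < β.real (Iic w))
    (hαP : ∀ᵐ z ∂α, z ∈ P₁) (hβP : ∀ᵐ z ∂β, z ∈ P₂)
    (hμP : ∀ᵐ z ∂μ, z.1 ∈ P₁ ∧ z.2 ∈ P₂)
    (r : E₁ × E₂ → ℝ) (x : E₁ × E₂) (hc : 0 ≤ r x)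
    (hF : ∀ w : E₁ × E₂, w.1 ∈ P₁ → w.2 ∈ P₂ →
      μ.real (Iic w) = r w * (μ₁.real (Iic w.1) * μ₂.real (Iic w.2)))
    (hr : ∀ w : E₁ × E₂, w.1 ∈ P₁ → w.2 ∈ P₂ → w ≤ x → r x ≤ r w)
    (m : ℕ) (hm : m ≠ 0)
    (ih : ∀ w : E₁ × E₂, w.1 ∈ P₁ → w.2 ∈ P₂ →
      r w ^ m * (α.real (Iic w.1) * β.real (Iic w.2)) ≤ ν.real (Iic w))
    (S : Set (E₁ × E₂)) (hS : μ S ≠ 0)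
    (hSr : ∀ y ∈ S, (x - y).1 ∈ P₁ ∧ (x - y).2 ∈ P₂ ∧ r x < r (x - y)) :
    r x ^ (m + 1) * ((α.conv μ₁).real (Iic x.1) * (β.conv μ₂).real (Iic x.2))
      < (ν.conv μ).real (Iic x) := by
  have hle : ∀ y : E₁ × E₂, y.1 ∈ P₁ → y.2 ∈ P₂ → x - y ≤ x := fun y h1 h2 =>
    sub_le_self _ (show (0 : E₁ × E₂) ≤ y from ⟨hP₁ _ h1, hP₂ _ h2⟩)
  -- part 1
  have i1 := conv_integrable hI ν μ x
  have i2 := conv_integrable hI (α.prod β) μ x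
  have p1 : r x ^ m * ((α.prod β).conv μ).real (Iic x) < (ν.conv μ).real (Iic x) := by
    rw [(conv_Iic hI ν μ x).2, (conv_Iic hI (α.prod β) μ x).2, ← integral_const_mul, ← sub_pos,
      ← integral_sub i1 (i2.const_mul _)]
    refine (integral_pos_iff_support_of_nonneg_ae ?_ (i1.sub (i2.const_mul _))).2 ?_
    rotate_left
    · refine lt_of_lt_of_le (pos_iff_ne_zero.2 hS) (measure_mono fun y hy => ?_)
      obtain ⟨h1, h2, h3⟩ := hSr y hy
      have a := ih (x - y) h1 h2
      have b : r x ^ m < r (x - y) ^ m := pow_lt_pow_left₀ h3 hc hm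
      have c := mul_pos (hα' _ h1) (hβ' _ h2)
      have d := mul_lt_mul_of_pos_right b c
      simp only [Function.mem_support, prod_Iic]
      exact (sub_pos.2 (lt_of_lt_of_le d a)).ne'
    · filter_upwards [hμP] with y hy
      simp only [Pi.zero_apply, Pi.sub_apply, prod_Iic, sub_nonneg]
      by_cases h1 : (x - y).1 ∈ P₁
      · by_cases h2 : (x - y).2 ∈ P₂
        · refine le_trans ?_ (ih (x - y) h1 h2)
          exact mul_le_mul_of_nonneg_right
            (pow_le_pow_left₀ hc (hr _ h1 h2 (hle y hy.1 hy.2)) m)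
            (mul_nonneg measureReal_nonneg measureReal_nonneg)
        · rw [hβ _ h2]; simp
      · rw [hα _ h1]; simp
  have p2 : r x * ((α.conv μ₁).real (Iic x.1) * (β.conv μ₂).real (Iic x.2)) ≤
      ((α.prod β).conv μ).real (Iic x) := by
    rw [Measure.conv_comm α, Measure.conv_comm β, Measure.conv_comm (α.prod β),
      (conv_Iic hI₁ _ _ _).2, (conv_Iic hI₂ _ _ _).2, (conv_Iic hI _ _ _).2,
      ← integral_prod_mul, ← integral_const_mul]
    refine integral_mono_ae
      (((conv_integrable hI₁ μ₁ α x.1).mul_prod (conv_integrable hI₂ μ₂ β x.2)).const_mul _)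
      (conv_integrable hI _ _ _) ?_
    have h1 : ∀ᵐ p ∂(α.prod β), p.1 ∈ P₁ := Measure.quasiMeasurePreserving_fst.ae hαP
    have h2 : ∀ᵐ p ∂(α.prod β), p.2 ∈ P₂ := Measure.quasiMeasurePreserving_snd.ae hβP
    filter_upwards [h1, h2] with z hz1 hz2
    by_cases h1 : (x - z).1 ∈ P₁
    · by_cases h2 : (x - z).2 ∈ P₂
      · rw [hF _ h1 h2]
        exact mul_le_mul_of_nonneg_right (hr _ h1 h2 (hle z hz1 hz2))
            (mul_nonneg measureReal_nonneg measureReal_nonneg)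
      · have := hμ₂ _ h2
        simp only [Prod.snd_sub] at this
        simp [this]
    · have := hμ₁ _ h1
      simp only [Prod.fst_sub] at this
      simp [this]
  refine lt_of_le_of_lt ?_ p1
  rw [pow_succ, mul_assoc]
  exact mul_le_mul_of_nonneg_left p2 (pow_nonneg hc m)

end Step

section Concrete

/-- the positive orthant -/
def PO (n : ℕ) : Set (Fin n → ℝ) := {y | ∀ i, 0 < y i}

theorem PO_open (n : ℕ) : IsOpen (PO n) := by
  have : PO n = Set.pi univ (fun _ => Ioi 0) := by ext; simp [PO]
  rw [this]
  exact isOpen_set_pi finite_univ fun _ _ => isOpen_Ioi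

theorem PO_add (n : ℕ) : ∀ a ∈ PO n, ∀ b ∈ PO n, a + b ∈ PO n :=
  fun _ ha _ hb i => add_pos (ha i) (hb i)

theorem PO_nonneg (n : ℕ) : ∀ a ∈ PO n, 0 ≤ a := fun _ ha i => (ha i).le

theorem PO_up (n : ℕ) : ∀ a ∈ PO n, ∀ b, a ≤ b → b ∈ PO n :=
  fun _ ha _ hb i => (ha i).trans_le (hb i)

theorem PO_half (n : ℕ) : ∀ a ∈ PO n, ∃ b ∈ PO n, b + b = a :=
  fun a ha => ⟨fun i => a i / 2, fun i => half_pos (ha i), by ext i; simp⟩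

theorem Iic_meas (n : ℕ) (x : Fin n → ℝ) : MeasurableSet (Iic x) := isClosed_Iic.measurableSet

theorem box_eq {n : ℕ} (x : Fin n → ℝ) :
    {y : Fin n → ℝ | ∀ i, 0 < y i ∧ y i ≤ x i} = PO n ∩ Iic x := by
  ext y; simp [PO, forall_and, Pi.le_def]

theorem no_const {k l : ℕ} (F : (Fin k → ℝ) × (Fin l → ℝ) → ℝ)
    (F₁ : (Fin k → ℝ) → ℝ) (F₂ : (Fin l → ℝ) → ℝ) (hk : 0 < k) (hl : 0 < l)
    (hMTP2 : ∀ x : (Fin k → ℝ) × (Fin l → ℝ),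
      (∀ i, 0 < x.1 i) → (∀ j, 0 < x.2 j) →
      ∀ c d : Fin k ⊕ Fin l, c ≠ d →
      0 < deriv (fun s => deriv
            (fun t => Real.log (F (updCoord (updCoord x d s) c t)))
            (coordVal x c)) (coordVal x d))
    (x : (Fin k → ℝ) × (Fin l → ℝ)) (hx1 : x.1 ∈ PO k) (hx2 : x.2 ∈ PO l)
    (c : ℝ) (hc : 0 < c) (hF₁ : ∀ w ∈ PO k, 0 < F₁ w) (hF₂ : ∀ w ∈ PO l, 0 < F₂ w)
    (h : ∀ w : (Fin k → ℝ) × (Fin l → ℝ), w.1 ∈ PO k → w.2 ∈ PO l → w ≤ x →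
      F w = c * (F₁ w.1 * F₂ w.2)) : False := by
  let p : (Fin k → ℝ) × (Fin l → ℝ) := (fun i => x.1 i / 2, fun j => x.2 j / 2)
  have hp1 : ∀ i, 0 < p.1 i := fun i => half_pos (hx1 i)
  have hp2 : ∀ i, 0 < p.2 i := fun i => half_pos (hx2 i)
  let i : Fin k := ⟨0, hk⟩
  let j : Fin l := ⟨0, hl⟩
  have key := hMTP2 p hp1 hp2 (Sum.inl i) (Sum.inr j) (by simp)
  simp only [updCoord, coordVal] at key
  have upd : ∀ {n : ℕ} (y : Fin n → ℝ) (_ : y ∈ PO n) (i : Fin n) (t : ℝ),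
      t ∈ Ioo 0 (y i) → Function.update (fun a => y a / 2) i t ∈ PO n ∧
        Function.update (fun a => y a / 2) i t ≤ y := by
    intro n y hy i t ht
    constructor
    · intro a
      by_cases ha : a = i
      · subst ha; simpa using ht.1
      · simpa [ha] using hy a
    · intro a
      by_cases ha : a = i
      · subst ha; simpa using ht.2.le
      · simpa [ha] using (hy a).le
  have e : (fun s => deriv (fun t => Real.log (F (Function.update p.1 i t, Function.update p.2 j s)))
      (p.1 i)) =ᶠ[nhds (p.2 j)]
      fun _ => deriv (fun t => Real.log (F₁ (Function.update p.1 i t))) (p.1 i) := by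
    have hj : Ioo 0 (x.2 j) ∈ nhds (p.2 j) := Ioo_mem_nhds (hp2 j) (half_lt_self (hx2 j))
    have hi : Ioo 0 (x.1 i) ∈ nhds (p.1 i) := Ioo_mem_nhds (hp1 i) (half_lt_self (hx1 i))
    filter_upwards [hj] with s hs
    obtain ⟨b1, b2⟩ := upd x.2 hx2 j s hs
    have : (fun t => Real.log (F (Function.update p.1 i t, Function.update p.2 j s)))
        =ᶠ[nhds (p.1 i)] fun t => Real.log c + (Real.log (F₁ (Function.update p.1 i t)) +
          Real.log (F₂ (Function.update p.2 j s))) := by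
      filter_upwards [hi] with t ht
      obtain ⟨a1, a2⟩ := upd x.1 hx1 i t ht
      rw [h (Function.update p.1 i t, Function.update p.2 j s) a1 b1 ⟨a2, b2⟩,
        Real.log_mul hc.ne' (mul_pos (hF₁ _ a1) (hF₂ _ b1)).ne',
        Real.log_mul (hF₁ _ a1).ne' (hF₂ _ b1).ne']
    rw [this.deriv_eq, deriv_const_add', deriv_add_const]
  rw [e.deriv_eq] at key
  simp at key

end Concrete

theorem convolution_inequality
    (k l : ℕ)
    (f F : (Fin k → ℝ) × (Fin l → ℝ) → ℝ)
    (f₁ : (Fin k → ℝ) → ℝ) (F₁ : (Fin k → ℝ) → ℝ)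
    (f₂ : (Fin l → ℝ) → ℝ) (F₂ : (Fin l → ℝ) → ℝ)
    -- f is a probability density, positive exactly on the positive orthant
    (hfpos : ∀ y : (Fin k → ℝ) × (Fin l → ℝ),
      (∀ i, 0 < y.1 i) → (∀ j, 0 < y.2 j) → 0 < f y)
    (hfsupp : ∀ y : (Fin k → ℝ) × (Fin l → ℝ),
      ¬ ((∀ i, 0 < y.1 i) ∧ (∀ j, 0 < y.2 j)) → f y = 0)
    (hfint : ∫ y, f y = 1)
    -- F is the cdf of f, and f₁, F₁, f₂, F₂ the marginal densities and cdfs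
    (hF : ∀ x : (Fin k → ℝ) × (Fin l → ℝ),
      F x = ∫ y in {y : (Fin k → ℝ) × (Fin l → ℝ) |
              (∀ i, 0 < y.1 i ∧ y.1 i ≤ x.1 i) ∧ (∀ j, 0 < y.2 j ∧ y.2 j ≤ x.2 j)}, f y)
    (hf₁ : ∀ x₁ : Fin k → ℝ, f₁ x₁ = ∫ y₂ : Fin l → ℝ, f (x₁, y₂))
    (hf₂ : ∀ x₂ : Fin l → ℝ, f₂ x₂ = ∫ y₁ : Fin k → ℝ, f (y₁, x₂))
    (hF₁ : ∀ x₁ : Fin k → ℝ,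
      F₁ x₁ = ∫ z₁ in {z₁ : Fin k → ℝ | ∀ i, 0 < z₁ i ∧ z₁ i ≤ x₁ i}, f₁ z₁)
    (hF₂ : ∀ x₂ : Fin l → ℝ,
      F₂ x₂ = ∫ z₂ in {z₂ : Fin l → ℝ | ∀ j, 0 < z₂ j ∧ z₂ j ≤ x₂ j}, f₂ z₂)
    -- F is C² and strictly MTP₂ on the positive orthant
    (hC2 : ContDiffOn ℝ 2 F {x | (∀ i, 0 < x.1 i) ∧ (∀ j, 0 < x.2 j)})
    (hMTP2 : ∀ x : (Fin k → ℝ) × (Fin l → ℝ),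
      (∀ i, 0 < x.1 i) → (∀ j, 0 < x.2 j) →
      ∀ c d : Fin k ⊕ Fin l, c ≠ d →
      0 < deriv (fun s => deriv
            (fun t => Real.log (F (updCoord (updCoord x d s) c t)))
            (coordVal x c)) (coordVal x d))
    -- the ratio r is > 1 and coordinatewise decreasing on the positive orthant
    (hr1 : ∀ x : (Fin k → ℝ) × (Fin l → ℝ),
      (∀ i, 0 < x.1 i) → (∀ j, 0 < x.2 j) → 1 < F x / (F₁ x.1 * F₂ x.2))
    (hrdec : ∀ x y : (Fin k → ℝ) × (Fin l → ℝ),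
      (∀ i, 0 < x.1 i) → (∀ j, 0 < x.2 j) →
      (∀ i, x.1 i ≤ y.1 i) → (∀ j, x.2 j ≤ y.2 j) →
      F y / (F₁ y.1 * F₂ y.2) ≤ F x / (F₁ x.1 * F₂ x.2))
    -- the m-fold convolutions of F and of its marginals
    (Fc : ℕ → (Fin k → ℝ) × (Fin l → ℝ) → ℝ)
    (F₁c : ℕ → (Fin k → ℝ) → ℝ) (F₂c : ℕ → (Fin l → ℝ) → ℝ)
    (hFc1 : Fc 1 = F) (hF₁c1 : F₁c 1 = F₁) (hF₂c1 : F₂c 1 = F₂)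
    (hFcrec : ∀ m : ℕ, 1 ≤ m → ∀ x : (Fin k → ℝ) × (Fin l → ℝ),
      Fc (m + 1) x = ∫ y in {y : (Fin k → ℝ) × (Fin l → ℝ) |
          (∀ i, 0 < y.1 i ∧ y.1 i ≤ x.1 i) ∧ (∀ j, 0 < y.2 j ∧ y.2 j ≤ x.2 j)},
        Fc m (x - y) * f y)
    (hF₁crec : ∀ m : ℕ, 1 ≤ m → ∀ x₁ : Fin k → ℝ,
      F₁c (m + 1) x₁ = ∫ y₁ in {y₁ : Fin k → ℝ | ∀ i, 0 < y₁ i ∧ y₁ i ≤ x₁ i},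
        F₁c m (x₁ - y₁) * f₁ y₁)
    (hF₂crec : ∀ m : ℕ, 1 ≤ m → ∀ x₂ : Fin l → ℝ,
      F₂c (m + 1) x₂ = ∫ y₂ in {y₂ : Fin l → ℝ | ∀ j, 0 < y₂ j ∧ y₂ j ≤ x₂ j},
        F₂c m (x₂ - y₂) * f₂ y₂) :
    ∀ m : ℕ, 2 ≤ m → ∀ x : (Fin k → ℝ) × (Fin l → ℝ),
      (∀ i, 0 < x.1 i) → (∀ j, 0 < x.2 j) →
      Fc m x > (F x / (F₁ x.1 * F₂ x.2)) ^ m * (F₁c m x.1 * F₂c m x.2) := by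
  set P : Set ((Fin k → ℝ) × (Fin l → ℝ)) := PO k ×ˢ PO l with hPdef
  have hPo : IsOpen P := (PO_open k).prod (PO_open l)
  have hI : ∀ x : (Fin k → ℝ) × (Fin l → ℝ), MeasurableSet (Iic x) :=
    fun x => isClosed_Iic.measurableSet
  have hPadd : ∀ a ∈ P, ∀ b ∈ P, a + b ∈ P := fun a ha b hb =>
    ⟨PO_add k _ ha.1 _ hb.1, PO_add l _ ha.2 _ hb.2⟩
  have hP0 : ∀ a ∈ P, 0 ≤ a := fun a ha => ⟨PO_nonneg k _ ha.1, PO_nonneg l _ ha.2⟩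
  have hPup : ∀ a ∈ P, ∀ b, a ≤ b → b ∈ P := fun a ha b hb =>
    ⟨PO_up k _ ha.1 _ hb.1, PO_up l _ ha.2 _ hb.2⟩
  have hbox : ∀ x : (Fin k → ℝ) × (Fin l → ℝ), {y : (Fin k → ℝ) × (Fin l → ℝ) |
      (∀ i, 0 < y.1 i ∧ y.1 i ≤ x.1 i) ∧ (∀ j, 0 < y.2 j ∧ y.2 j ≤ x.2 j)} = P ∩ Iic x := by
    intro x; ext y
    simp only [hPdef, PO, forall_and, mem_ofPred_eq, mem_inter_iff, mem_prod, mem_Iic,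
      Prod.le_def, Pi.le_def]
    tauto
  have fint : Integrable f := by
    by_contra h
    rw [integral_undef h] at hfint
    exact zero_ne_one hfint
  have fint' : Integrable f ((volume : Measure (Fin k → ℝ)).prod (volume : Measure (Fin l → ℝ))) :=
    fint
  have f0 : ∀ y, 0 ≤ f y := by
    intro y
    by_cases h : (∀ i, 0 < y.1 i) ∧ (∀ j, 0 < y.2 j)
    · exact (hfpos y h.1 h.2).le
    · exact (hfsupp y h).ge
  have fs : ∀ y, y ∉ P → f y = 0 := fun y hy => hfsupp y hy
  have f₁int : Integrable f₁ := by
    rw [show f₁ = _ from funext hf₁]; exact fint'.integral_prod_left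
  have f₂int : Integrable f₂ := by
    rw [show f₂ = _ from funext hf₂]; exact fint'.integral_prod_right
  have f₁0 : ∀ y, 0 ≤ f₁ y := fun y => by rw [hf₁]; exact integral_nonneg fun _ => f0 _
  have f₂0 : ∀ y, 0 ≤ f₂ y := fun y => by rw [hf₂]; exact integral_nonneg fun _ => f0 _
  have f₁s : ∀ y, y ∉ PO k → f₁ y = 0 := fun y hy => by
    rw [hf₁]
    have : ∀ z, f (y, z) = 0 := fun z => fs _ fun h => hy h.1
    simp [this]
  have f₂s : ∀ y, y ∉ PO l → f₂ y = 0 := fun y hy => by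
    rw [hf₂]
    have : ∀ z, f (z, y) = 0 := fun z => fs _ fun h => hy h.2
    simp [this]
  have cF := cdf_eq hI hPo.measurableSet hPadd hP0 hPup volume f fint f0 fs Fc _ hbox
    (fun x => by rw [hFc1]; exact hF x) hFcrec
  have cF₁ := cdf_eq (Iic_meas k) (PO_open k).measurableSet (PO_add k) (PO_nonneg k) (PO_up k)
    volume f₁ f₁int f₁0 f₁s F₁c _ box_eq (fun x => by rw [hF₁c1]; exact hF₁ x) hF₁crec
  have cF₂ := cdf_eq (Iic_meas l) (PO_open l).measurableSet (PO_add l) (PO_nonneg l) (PO_up l)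
    volume f₂ f₂int f₂0 f₂s F₂c _ box_eq (fun x => by rw [hF₂c1]; exact hF₂ x) hF₂crec
  have := dm_finite volume f fint
  have := dm_finite volume f₁ f₁int
  have := dm_finite volume f₂ f₂int
  set μ := dm volume f with hμ
  set μ₁ := dm volume f₁ with hμ₁
  set μ₂ := dm volume f₂ with hμ₂
  have sμ : ∀ᵐ y ∂μ, y ∈ P := dm_supp volume f fint fs
  have sμ₁ : ∀ᵐ y ∂μ₁, y ∈ PO k := dm_supp volume f₁ f₁int f₁s
  have sμ₂ : ∀ᵐ y ∂μ₂, y ∈ PO l := dm_supp volume f₂ f₂int f₂s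
  have e : ∀ x, F x = μ.real (Iic x) := fun x => by rw [← hFc1]; exact cF 0 x
  have e₁ : ∀ x, F₁ x = μ₁.real (Iic x) := fun x => by rw [← hF₁c1]; exact cF₁ 0 x
  have e₂ : ∀ x, F₂ x = μ₂.real (Iic x) := fun x => by rw [← hF₂c1]; exact cF₂ 0 x
  have F₁0 : ∀ x, 0 ≤ F₁ x := fun x => by rw [e₁]; exact measureReal_nonneg
  have F₂0 : ∀ x, 0 ≤ F₂ x := fun x => by rw [e₂]; exact measureReal_nonneg
  have ne : ∀ x : (Fin k → ℝ) × (Fin l → ℝ), x.1 ∈ PO k → x.2 ∈ PO l →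
      F₁ x.1 * F₂ x.2 ≠ 0 := by
    intro x h1 h2 h
    have := hr1 x h1 h2
    rw [h, div_zero] at this
    linarith
  have F₁p : ∀ w ∈ PO k, 0 < F₁ w := fun w hw =>
    lt_of_le_of_ne (F₁0 w) (left_ne_zero_of_mul (ne (w, fun _ => 1) hw fun _ => one_pos)).symm
  have F₂p : ∀ w ∈ PO l, 0 < F₂ w := fun w hw =>
    lt_of_le_of_ne (F₂0 w) (right_ne_zero_of_mul (ne (fun _ => 1, w) (fun _ => one_pos) hw)).symm
  have Fr : ∀ w : (Fin k → ℝ) × (Fin l → ℝ), w.1 ∈ PO k → w.2 ∈ PO l →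
      F w = F w / (F₁ w.1 * F₂ w.2) * (F₁ w.1 * F₂ w.2) := fun w h1 h2 =>
    (div_mul_cancel₀ _ (ne w h1 h2)).symm
  -- marginal bounds
  have Fle₁ : ∀ x, F x ≤ F₁ x.1 := by
    intro x
    have : ∫ y in (PO k ∩ Iic x.1) ×ˢ (univ : Set (Fin l → ℝ)), f y = F₁ x.1 := by
      rw [Measure.volume_eq_prod, setIntegral_prod _ fint'.integrableOn, hF₁, box_eq]
      simp [hf₁]
    rw [← this, hF, hbox]
    refine setIntegral_mono_set fint.integrableOn (Eventually.of_forall f0)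
      (Eventually.of_forall ?_)
    exact fun y hy => ⟨⟨hy.1.1, hy.2.1⟩, trivial⟩
  have Fle₂ : ∀ x, F x ≤ F₂ x.2 := by
    intro x
    have : ∫ y in (univ : Set (Fin k → ℝ)) ×ˢ (PO l ∩ Iic x.2), f y = F₂ x.2 := by
      rw [Measure.volume_eq_prod, ← setIntegral_prod_swap,
        setIntegral_prod (fun z => f z.swap) fint'.swap.integrableOn, hF₂, box_eq]
      simp [hf₂]
    rw [← this, hF, hbox]
    refine setIntegral_mono_set fint.integrableOn (Eventually.of_forall f0)
      (Eventually.of_forall ?_)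
    exact fun y hy => ⟨trivial, ⟨hy.1.2, hy.2.2⟩⟩
  have one1 : ((1 : Fin k → ℝ)) ∈ PO k := fun _ => one_pos
  have one2 : ((1 : Fin l → ℝ)) ∈ PO l := fun _ => one_pos
  have hlt : F₁ 1 * F₂ 1 < F (1, 1) := by
    have := hr1 (1, 1) one1 one2
    rwa [one_lt_div (mul_pos (F₁p 1 one1) (F₂p 1 one2))] at this
  have hk : 0 < k := by
    rcases Nat.eq_zero_or_pos k with h | h
    · exfalso
      subst h
      have h1 : F₁ 1 = 1 := by
        have a : ∫ y, f₁ y = 1 := by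
          simp only [hf₁]; rw [← hfint]; exact (integral_prod f fint').symm
        rw [hF₁, ← a]
        convert setIntegral_univ
        ext y; simp
      have := Fle₂ (1, 1)
      rw [h1] at hlt
      simp only at this
      linarith
    · exact h
  have hl : 0 < l := by
    rcases Nat.eq_zero_or_pos l with h | h
    · exfalso
      subst h
      have h1 : F₂ 1 = 1 := by
        have a : ∫ y, f₂ y = 1 := by
          simp only [hf₂]; rw [← hfint]; exact (integral_prod_symm f fint').symm
        rw [hF₂, ← a]
        convert setIntegral_univ
        ext y; simp
      have := Fle₁ (1, 1)
      rw [h1] at hlt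
      simp only at this
      linarith
    · exact h
  -- positivity for the marginal measures
  have pμ₁ : ∀ w ∈ PO k, 0 < μ₁ (Iic w) := fun w hw => by
    have := F₁p w hw
    rw [e₁] at this
    exact (ENNReal.toReal_pos_iff.1 this).1
  have pμ₂ : ∀ w ∈ PO l, 0 < μ₂ (Iic w) := fun w hw => by
    have := F₂p w hw
    rw [e₂] at this
    exact (ENNReal.toReal_pos_iff.1 this).1
  -- the induction step
  have step : ∀ m : ℕ, (∀ w : (Fin k → ℝ) × (Fin l → ℝ), w.1 ∈ PO k → w.2 ∈ PO l →
      (F w / (F₁ w.1 * F₂ w.2)) ^ (m + 1) * (F₁c (m + 1) w.1 * F₂c (m + 1) w.2)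
        ≤ Fc (m + 1) w) →
      ∀ x : (Fin k → ℝ) × (Fin l → ℝ), x.1 ∈ PO k → x.2 ∈ PO l →
      (F x / (F₁ x.1 * F₂ x.2)) ^ (m + 1 + 1) * (F₁c (m + 1 + 1) x.1 * F₂c (m + 1 + 1) x.2)
        < Fc (m + 1 + 1) x := by
    intro m ih x hx1 hx2
    have hr0 : 0 < F x / (F₁ x.1 * F₂ x.2) := one_pos.trans (hr1 x hx1 hx2)
    obtain ⟨w, hw1, hw2, hwx, hw⟩ : ∃ w : (Fin k → ℝ) × (Fin l → ℝ), w.1 ∈ PO k ∧ w.2 ∈ PO l ∧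
        w ≤ x ∧ F x / (F₁ x.1 * F₂ x.2) < F w / (F₁ w.1 * F₂ w.2) := by
      by_contra! hcon
      refine no_const F F₁ F₂ hk hl hMTP2 x hx1 hx2 _ hr0 F₁p F₂p fun w hw1 hw2 hwx => ?_
      rw [← le_antisymm (hcon w hw1 hw2 hwx) (hrdec w x hw1 hw2 hwx.1 hwx.2)]
      exact Fr w hw1 hw2
    let S : Set ((Fin k → ℝ) × (Fin l → ℝ)) :=
      {y | (y.1 - (x.1 - w.1) ∈ PO k ∧ y.2 - (x.2 - w.2) ∈ PO l) ∧
        (x.1 - y.1 ∈ PO k ∧ x.2 - y.2 ∈ PO l)}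
    have hSo : IsOpen S := by
      refine IsOpen.inter (IsOpen.inter ?_ ?_) (IsOpen.inter ?_ ?_)
      · exact (PO_open k).preimage (f := fun y : (Fin k → ℝ) × (Fin l → ℝ) => y.1 - (x.1 - w.1))
          (by fun_prop)
      · exact (PO_open l).preimage (f := fun y : (Fin k → ℝ) × (Fin l → ℝ) => y.2 - (x.2 - w.2))
          (by fun_prop)
      · exact (PO_open k).preimage (f := fun y : (Fin k → ℝ) × (Fin l → ℝ) => x.1 - y.1)
          (by fun_prop)
      · exact (PO_open l).preimage (f := fun y : (Fin k → ℝ) × (Fin l → ℝ) => x.2 - y.2)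
          (by fun_prop)
    have hSne : S.Nonempty := by
      refine ⟨(fun i => x.1 i - w.1 i / 2, fun i => x.2 i - w.2 i / 2),
        ⟨fun i => ?_, fun i => ?_⟩, fun i => ?_, fun i => ?_⟩
      · have := hw1 i; simp only [Pi.sub_apply]; linarith
      · have := hw2 i; simp only [Pi.sub_apply]; linarith
      · have := hw1 i; simp only [Pi.sub_apply]; linarith
      · have := hw2 i; simp only [Pi.sub_apply]; linarith
    have hSμ : μ S ≠ 0 := by
      intro h0
      rw [hμ, dm, withDensity_apply_eq_zero' fint.aemeasurable.ennreal_ofReal] at h0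
      have : S ⊆ {y | ENNReal.ofReal (f y) ≠ 0} ∩ S := by
        intro y hy
        refine ⟨?_, hy⟩
        have : 0 < f y := by
          refine hfpos y (fun i => ?_) (fun i => ?_)
          · have a := hy.1.1 i; have b := hwx.1 i
            simp only [Pi.sub_apply] at a; linarith
          · have a := hy.1.2 i; have b := hwx.2 i
            simp only [Pi.sub_apply] at a; linarith
        simpa using this
      exact (hSo.measure_pos volume hSne).ne' (measure_mono_null this h0)
    simp only [cF, cF₁, cF₂] at ih ⊢
    simp only [cpow] at ⊢
    refine step_ineq (Iic_meas k) (Iic_meas l) hI (PO k) (PO l) (PO_nonneg k) (PO_nonneg l)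
      μ (cpow μ m) (cpow μ₁ m) μ₁ (cpow μ₂ m) μ₂
      (cpow_zero_of_not (PO_open k).measurableSet (PO_add k) (PO_up k) μ₁ sμ₁ m)
      (cpow_zero_of_not (PO_open l).measurableSet (PO_add l) (PO_up l) μ₂ sμ₂ m)
      (cpow_zero_of_not (PO_open k).measurableSet (PO_add k) (PO_up k) μ₁ sμ₁ 0)
      (cpow_zero_of_not (PO_open l).measurableSet (PO_add l) (PO_up l) μ₂ sμ₂ 0)
      (cpow_pos (Iic_meas k) (PO_half k) μ₁ pμ₁ m)
      (cpow_pos (Iic_meas l) (PO_half l) μ₂ pμ₂ m)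
      (cpow_supp (PO_open k).measurableSet (PO_add k) μ₁ sμ₁ m)
      (cpow_supp (PO_open l).measurableSet (PO_add l) μ₂ sμ₂ m)
      sμ (fun w => F w / (F₁ w.1 * F₂ w.2)) x hr0.le ?_ ?_ (m + 1) (by omega) ih S hSμ ?_
    · intro w h1 h2
      rw [← e, ← e₁, ← e₂]
      exact Fr w h1 h2
    · intro w h1 h2 h3
      exact hrdec w x h1 h2 h3.1 h3.2
    · intro y hy
      refine ⟨hy.2.1, hy.2.2, lt_of_lt_of_le hw (hrdec (x - y) w hy.2.1 hy.2.2 ?_ ?_)⟩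
      · intro i
        have a := hy.1.1 i
        simp only [Pi.sub_apply, Prod.fst_sub] at a ⊢; linarith
      · intro i
        have a := hy.1.2 i
        simp only [Pi.sub_apply, Prod.snd_sub] at a ⊢; linarith
  have all : ∀ m : ℕ, ∀ w : (Fin k → ℝ) × (Fin l → ℝ), w.1 ∈ PO k → w.2 ∈ PO l →
      (F w / (F₁ w.1 * F₂ w.2)) ^ (m + 1) * (F₁c (m + 1) w.1 * F₂c (m + 1) w.2)
        ≤ Fc (m + 1) w := by
    intro m
    induction m with
    | zero =>
      intro w h1 h2
      simp only [zero_add, pow_one, hFc1, hF₁c1, hF₂c1]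
      exact (Fr w h1 h2).ge
    | succ m ih => exact fun w h1 h2 => (step m ih w h1 h2).le
  intro m hm x hx1 hx2
  obtain ⟨n, rfl⟩ : ∃ n, m = n + 1 + 1 := ⟨m - 2, by omega⟩
  exact step n (all n) x hx1 hx2
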